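/- For every p > 0 let λ_1(p) ≥ … ≥ λ_d(p) be the eigenvalues of Z_p := (A^{p/2} B^p A^{p/2})^{1/p} in decreasing order with multiplicities. Then for every i = 1, …, d the limit λ_i := lim_{p→∞} λ_i(p) exists, and a_1 b_1 ≥ λ_1 ≥ λ_2 ≥ … ≥ λ_d ≥ a_d b_d. -/

import Mathlib

open Matrix Filter Topology Finset
open scoped ComplexOrder

/-- Functional-calculus power of a (Hermitian, in practice positive semidefinite)
matrix, with the convention `0 ^ r = 0` for `r > 0`. -/
noncomputable def psdPow {d : ℕ} (A : Matrix (Fin d) (Fin d) ℂ) (r : ℝ) :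
    Matrix (Fin d) (Fin d) ℂ :=
  if hA : A.IsHermitian then
    (hA.eigenvectorUnitary : Matrix (Fin d) (Fin d) ℂ) *
      Matrix.diagonal (fun i => ((hA.eigenvalues i ^ r : ℝ) : ℂ)) *
      star (hA.eigenvectorUnitary : Matrix (Fin d) (Fin d) ℂ)
  else 0

/-- The eigenvalues of a Hermitian matrix, sorted in decreasing order
(with multiplicities). -/
noncomputable def eigsDesc {d : ℕ} (A : Matrix (Fin d) (Fin d) ℂ) : Fin d → ℝ :=
  if hA : A.IsHermitian then
    fun i => hA.eigenvalues (Tuple.sort hA.eigenvalues i.rev)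
  else 0

/-- `Zmat A B p = (A^{p/2} B^p A^{p/2})^{1/p}`. -/
noncomputable def Zmat {d : ℕ} (A B : Matrix (Fin d) (Fin d) ℂ) (p : ℝ) :
    Matrix (Fin d) (Fin d) ℂ :=
  psdPow (psdPow A (p / 2) * psdPow B p * psdPow A (p / 2)) (1 / p)

/-!
The products of the `k` largest eigenvalues of `Z_p ^ p = A^{p/2} B^p A^{p/2}` are easier to control
than the single eigenvalues. Up to constant factors such a product equals the `k`-th elementary
symmetric function of the eigenvalues, which up to sign is a coefficient of the characteristic
polynomial of `A^{p/2} B^p A^{p/2}`, hence of `A^p B^p`. That coefficient is a finite sum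
`∑ c_x x ^ p` with bases independent of `p`, so it grows exactly like `x ^ p` for its largest base.
Taking quotients for consecutive `k`, the eigenvalue `λ_i(p) ^ p` grows exactly like `x_i ^ p` for
some `x_i`, and `p`-th roots give `λ_i(p) → x_i`. The bounds hold for every `p`, by conjugating
`b_d ^ p ≤ B^p ≤ b_1 ^ p` with `A^{p/2}`.
-/

section ElementarySymmetric

variable {ι : Type*}

lemma prod_le_prod_of_card_eq_of_sdiff_le [DecidableEq ι] {m : ι → ℝ} {s t : Finset ι}
    (hcard : #t = #s) (hm : ∀ i ∈ t, 0 ≤ m i) (hle : ∀ i ∈ t \ s, ∀ j ∈ s \ t, m i ≤ m j) :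
    ∏ i ∈ t, m i ≤ ∏ i ∈ s, m i := by
  let e : ↥(t \ s) ≃ ↥(s \ t) := equivOfCardEq (card_sdiff_comm hcard)
  have hsdiff : ∏ i ∈ t \ s, m i ≤ ∏ j ∈ s \ t, m j := by
    rw [← prod_coe_sort, ← prod_coe_sort (s \ t), ← e.prod_comp]
    exact prod_le_prod (fun i _ ↦ hm i (sdiff_subset i.2)) fun i _ ↦ hle i i.2 (e i) (e i).2
  rw [← prod_sdiff (inter_subset_left : t ∩ s ⊆ t), ← prod_sdiff (inter_subset_right : t ∩ s ⊆ s),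
    sdiff_inter_self_left, sdiff_inter_self_right]
  exact mul_le_mul_of_nonneg_right hsdiff (prod_nonneg fun i hi ↦ hm i (mem_inter.1 hi).1)

lemma prod_le_prod_of_isLowerSet [LinearOrder ι] {m : ι → ℝ} (hm : ∀ i, 0 ≤ m i)
    (hanti : Antitone m) {s t : Finset ι} (hs : IsLowerSet (s : Set ι)) (hcard : #t = #s) :
    ∏ i ∈ t, m i ≤ ∏ i ∈ s, m i := by
  refine prod_le_prod_of_card_eq_of_sdiff_le hcard (fun i _ ↦ hm i) fun i hi j hj ↦ hanti ?_
  by_contra! hij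
  exact (mem_sdiff.1 hi).2 (hs hij.le (mem_sdiff.1 hj).1)

lemma prod_le_esymm [Fintype ι] {m : ι → ℝ} (hm : ∀ i, 0 ≤ m i) (s : Finset ι) :
    ∏ i ∈ s, m i ≤ (univ.val.map m).esymm #s := by
  rw [Finset.esymm_map_val]
  exact single_le_sum (f := fun t ↦ ∏ i ∈ t, m i) (fun t _ ↦ prod_nonneg fun i _ ↦ hm i)
    (mem_powersetCard.2 ⟨subset_univ s, rfl⟩)

lemma esymm_le_choose_mul_prod [LinearOrder ι] [Fintype ι] {m : ι → ℝ} (hm : ∀ i, 0 ≤ m i)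
    (hanti : Antitone m) {s : Finset ι} (hs : IsLowerSet (s : Set ι)) :
    (univ.val.map m).esymm #s ≤ (Fintype.card ι).choose #s * ∏ i ∈ s, m i := by
  rw [Finset.esymm_map_val, ← card_univ, ← card_powersetCard, ← nsmul_eq_mul]
  exact sum_le_card_nsmul _ _ _ fun t ht ↦
    prod_le_prod_of_isLowerSet hm hanti hs (mem_powersetCard.1 ht).2

lemma norm_coeff_prod_X_sub_C [Fintype ι] {m : ι → ℝ} (hm : ∀ i, 0 ≤ m i) {k : ℕ}
    (hk : k ≤ Fintype.card ι) :
    ‖(∏ i, (Polynomial.X - Polynomial.C (m i : ℂ))).coeff (Fintype.card ι - k)‖ =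
      (univ.val.map m).esymm k := by
  have hmap : ∏ i, (Polynomial.X - Polynomial.C (m i : ℂ)) = Polynomial.map Complex.ofRealHom
      ((univ.val.map m).map fun t ↦ Polynomial.X - Polynomial.C t).prod := by
    simp [Polynomial.map_prod, Multiset.map_map]
  have hnonneg : 0 ≤ (univ.val.map m).esymm k := by
    rw [Finset.esymm_map_val]
    exact sum_nonneg fun t _ ↦ prod_nonneg fun i _ ↦ hm i
  have hcard : (univ.val.map m).card = Fintype.card ι := by simp
  rw [hmap, Polynomial.coeff_map, Multiset.prod_X_sub_C_coeff _ (by omega), hcard,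
    Nat.sub_sub_self hk]
  simp [abs_of_nonneg hnonneg]

end ElementarySymmetric

section ExponentialSums

open Asymptotics
open scoped NNReal

lemma tendsto_norm_rpow_one_div_of_isTheta_rpow {E : Type*} [NormedAddCommGroup E] {f : ℝ → E}
    {x : ℝ} (hx : 0 ≤ x) (h : f =Θ[atTop] fun p : ℝ ↦ x ^ p) :
    Tendsto (fun p : ℝ ↦ ‖f p‖ ^ (1 / p)) atTop (𝓝 x) := by
  have hroot (c : ℝ) (hc : 0 < c) :
      Tendsto (fun p : ℝ ↦ (c * ‖x ^ p‖) ^ (1 / p)) atTop (𝓝 x) := by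
    have hconst : Tendsto (fun p : ℝ ↦ c ^ (1 / p) * x) atTop (𝓝 x) := by
      have hexp : Tendsto (fun p : ℝ ↦ 1 / p) atTop (𝓝 0) := tendsto_const_nhds.div_atTop tendsto_id
      simpa using (tendsto_const_nhds.rpow hexp (Or.inl hc.ne')).mul_const x
    refine hconst.congr' ?_
    filter_upwards [eventually_gt_atTop 0] with p hp
    rw [Real.mul_rpow hc.le (norm_nonneg _), Real.norm_of_nonneg (by positivity), one_div,
      Real.rpow_rpow_inv hx hp.ne']
  obtain ⟨C, hC, hle⟩ := h.1.exists_pos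
  obtain ⟨c, hc, hge⟩ := h.2.exists_pos
  refine tendsto_of_tendsto_of_tendsto_of_le_of_le' (hroot c⁻¹ (inv_pos.2 hc)) (hroot C hC) ?_ ?_
  · filter_upwards [hge.bound, eventually_gt_atTop 0] with p hfp hp
    gcongr
    rwa [inv_mul_le_iff₀ hc]
  · filter_upwards [hle.bound, eventually_gt_atTop 0] with p hfp hp
    gcongr

/-- The exponential functions `p ↦ x ^ p` as a monoid homomorphism in the base `x`. The base `0` is
included, so that powers of singular matrices are covered; it gives the indicator function of
`{0}`. -/
noncomputable def rpowHom : ℝ≥0 →* (ℝ → ℂ) where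
  toFun x p := ((x ^ p : ℝ) : ℂ)
  map_one' := by ext; simp
  map_mul' x y := by ext; simp [Real.mul_rpow]

/-- The algebra of exponential sums `p ↦ ∑ c_x x ^ p` with complex coefficients and nonnegative
bases. -/
noncomputable def expSums : Subalgebra ℂ (ℝ → ℂ) :=
  Algebra.adjoin ℂ (MonoidHom.mrange rpowHom)

lemma rpow_mem_expSums {x : ℝ} (hx : 0 ≤ x) : (fun p : ℝ ↦ ((x ^ p : ℝ) : ℂ)) ∈ expSums :=
  Algebra.subset_adjoin ⟨⟨x, hx⟩, rfl⟩

lemma exists_sum_rpow_of_mem_expSums {f : ℝ → ℂ} (hf : f ∈ expSums) :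
    ∃ c : ℝ≥0 →₀ ℂ, f = fun p : ℝ ↦ ∑ x ∈ c.support, c x * ((x ^ p : ℝ) : ℂ) := by
  rw [expSums, ← Subalgebra.mem_toSubmodule, Algebra.adjoin_eq_span, Submonoid.closure_eq,
    MonoidHom.coe_mrange, Finsupp.mem_span_range_iff_exists_finsupp] at hf
  obtain ⟨c, rfl⟩ := hf
  exact ⟨c, by ext p; simp [Finsupp.sum, rpowHom]⟩

lemma isLittleO_rpow_rpow_of_lt {x y : ℝ} (hx : 0 ≤ x) (hxy : x < y) :
    (fun p : ℝ ↦ x ^ p) =o[atTop] fun p ↦ y ^ p := by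
  have hy : 0 < y := hx.trans_lt hxy
  rw [isLittleO_iff_tendsto fun p h ↦ absurd h (Real.rpow_pos_of_pos hy p).ne']
  simp_rw [← Real.div_rpow hx hy.le]
  exact tendsto_rpow_atTop_of_base_lt_one _ (by linarith [div_nonneg hx hy.le])
    ((div_lt_one hy).2 hxy)

lemma exists_isTheta_rpow_of_mem_expSums {f : ℝ → ℂ} (hf : f ∈ expSums) :
    ∃ x : ℝ, 0 ≤ x ∧ f =Θ[atTop] fun p : ℝ ↦ x ^ p := by
  obtain ⟨c, rfl⟩ := exists_sum_rpow_of_mem_expSums hf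
  have hterm (x : ℝ≥0) : (fun p : ℝ ↦ ((x ^ p : ℝ) : ℂ)) =Θ[atTop] fun p : ℝ ↦ (x : ℝ) ^ p :=
    .of_norm_eventuallyEq_norm (.of_forall fun p ↦ Complex.norm_real _)
  rcases c.support.eq_empty_or_nonempty with hempty | hne
  · refine ⟨0, le_rfl, EventuallyEq.trans_isTheta ?_ (hterm 0)⟩
    filter_upwards [eventually_gt_atTop 0] with p hp
    simp [hempty, hp.ne']
  · obtain ⟨x, hx, hmax⟩ := exists_max_image c.support id hne
    refine ⟨x, x.2, ?_⟩
    simp_rw [← add_sum_erase _ _ hx]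
    have hlead : (fun p : ℝ ↦ c x * ((x ^ p : ℝ) : ℂ)) =Θ[atTop] fun p : ℝ ↦ (x : ℝ) ^ p :=
      (isTheta_const_mul_left (Finsupp.mem_support_iff.1 hx)).2 (hterm x)
    refine hlead.add_isLittleO (IsLittleO.fun_sum fun y hy ↦ ?_)
    have hyx : y < x := (hmax y (mem_of_mem_erase hy)).lt_of_ne (ne_of_mem_erase hy)
    exact ((hterm y).trans_isLittleO (isLittleO_rpow_rpow_of_lt y.2 hyx)).const_mul_left _

lemma exists_isTheta_rpow_of_prod {ι : Type*} [LinearOrder ι] [LocallyFiniteOrderBot ι]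
    {m : ℝ → ι → ℝ} (hm : ∀ᶠ p in atTop, ∀ i, 0 ≤ m p i) (hanti : ∀ᶠ p in atTop, Antitone (m p))
    (h : ∀ s : Finset ι, IsLowerSet (s : Set ι) →
      ∃ x : ℝ, 0 ≤ x ∧ (fun p ↦ ∏ i ∈ s, m p i) =Θ[atTop] fun p : ℝ ↦ x ^ p) (i : ι) :
    ∃ x : ℝ, 0 ≤ x ∧ (fun p ↦ m p i) =Θ[atTop] fun p : ℝ ↦ x ^ p := by
  obtain ⟨x, hx, hlt⟩ := h (Iio i) (by simpa using isLowerSet_Iio i)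
  obtain ⟨y, hy, hle⟩ := h (Iic i) (by simpa using isLowerSet_Iic i)
  -- If `x = 0` then `m p i` vanishes eventually, and `y / x = 0` is still the right base.
  refine ⟨y / x, by positivity, ?_⟩
  simp_rw [Real.div_rpow hy hx]
  refine EventuallyEq.trans_isTheta ?_ (hle.div hlt)
  filter_upwards [hm, hanti] with p hmp hantip
  rw [← prod_Iio_mul_eq_prod_Iic]
  by_cases hzero : ∏ j ∈ Iio i, m p j = 0
  · obtain ⟨j, hj, hmj⟩ := prod_eq_zero_iff.1 hzero
    rw [hzero, div_zero]
    exact le_antisymm (hmj ▸ hantip (mem_Iio.1 hj).le) (hmp i)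
  · exact (mul_div_cancel_left₀ _ hzero).symm

end ExponentialSums

section MatrixEntries

variable {R α n : Type*} [CommRing R] [Fintype n] {S : Subalgebra R (α → R)}

lemma mul_entry_mem {F G : α → Matrix n n R} (hF : ∀ i j, (fun p ↦ F p i j) ∈ S)
    (hG : ∀ i j, (fun p ↦ G p i j) ∈ S) (i j : n) : (fun p ↦ (F p * G p) i j) ∈ S := by
  have hsum : (fun p ↦ (F p * G p) i j) = ∑ k, (fun p ↦ F p i k) * fun p ↦ G p k j := by
    ext p
    simp [Matrix.mul_apply]
  rw [hsum]
  exact sum_mem fun k _ ↦ mul_mem (hF i k) (hG k j)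

lemma charpoly_coeff_mem [DecidableEq n] {F : α → Matrix n n R}
    (hF : ∀ i j, (fun p ↦ F p i j) ∈ S) (k : ℕ) : (fun p ↦ (F p).charpoly.coeff k) ∈ S := by
  let N : Matrix n n S := .of fun i j ↦ ⟨fun p ↦ F p i j, hF i j⟩
  have heval (p : α) : F p = N.map ((Pi.evalRingHom (fun _ ↦ R) p).comp S.val.toRingHom) := rfl
  have hcoeff : (fun p ↦ (F p).charpoly.coeff k) = N.charpoly.coeff k := by
    ext p
    rw [heval, Matrix.charpoly_map, Polynomial.coeff_map]
    rfl
  exact hcoeff ▸ (N.charpoly.coeff k).2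

end MatrixEntries

section SortedEigenvalues

variable {d : ℕ} {M : Matrix (Fin d) (Fin d) ℂ}

lemma exists_perm_eigsDesc_eq (hM : M.IsHermitian) :
    ∃ σ : Equiv.Perm (Fin d), eigsDesc M = hM.eigenvalues ∘ σ :=
  ⟨Fin.revPerm.trans (Tuple.sort hM.eigenvalues), by rw [eigsDesc, dif_pos hM]; rfl⟩

lemma antitone_eigsDesc (M : Matrix (Fin d) (Fin d) ℂ) : Antitone (eigsDesc M) := by
  unfold eigsDesc
  split_ifs with hM
  · exact fun i j hij ↦ Tuple.monotone_sort hM.eigenvalues (Fin.rev_le_rev.2 hij)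
  · exact antitone_const

lemma eigsDesc_mem_spectrum (hM : M.IsHermitian) (i : Fin d) : eigsDesc M i ∈ spectrum ℝ M := by
  obtain ⟨σ, hσ⟩ := exists_perm_eigsDesc_eq hM
  exact hσ ▸ hM.eigenvalues_mem_spectrum_real (σ i)

lemma eigsDesc_nonneg (hM : M.PosSemidef) (i : Fin d) : 0 ≤ eigsDesc M i := by
  obtain ⟨σ, hσ⟩ := exists_perm_eigsDesc_eq hM.1
  exact hσ ▸ hM.eigenvalues_nonneg (σ i)

lemma charpoly_eq_prod_eigsDesc (hM : M.IsHermitian) :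
    M.charpoly = ∏ i, (Polynomial.X - Polynomial.C (eigsDesc M i : ℂ)) := by
  obtain ⟨σ, hσ⟩ := exists_perm_eigsDesc_eq hM
  rw [hM.charpoly_eq, hσ]
  exact (Equiv.prod_comp σ _).symm

lemma eigsDesc_eq_of_charpoly_eq (hM : M.IsHermitian) {c : Fin d → ℝ} (hc : Antitone c)
    (h : M.charpoly = ∏ i, (Polynomial.X - Polynomial.C (c i : ℂ))) : eigsDesc M = c := by
  have hroots (f : Fin d → ℝ) : (∏ i, (Polynomial.X - Polynomial.C (f i : ℂ))).roots =
      (univ.val.map f).map Complex.ofReal := by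
    have h := Polynomial.roots_multiset_prod_X_sub_C (univ.val.map fun i ↦ (f i : ℂ))
    rw [Multiset.map_map] at h ⊢
    exact h
  have hmap : univ.val.map (eigsDesc M) = univ.val.map c :=
    Multiset.map_injective Complex.ofReal_injective <| by
      rw [← hroots, ← hroots, ← charpoly_eq_prod_eigsDesc hM, h]
  rw [Fin.univ_val_map, Fin.univ_val_map, Multiset.coe_eq_coe] at hmap
  exact List.ofFn_injective <| hmap.eq_of_pairwise'
    (antitone_eigsDesc M).sortedGE_ofFn.pairwise hc.sortedGE_ofFn.pairwise

lemma eigsDesc_cfc (hM : M.IsHermitian) {f : ℝ → ℝ} (hf : MonotoneOn f (spectrum ℝ M)) :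
    eigsDesc (cfc f M) = f ∘ eigsDesc M := by
  refine eigsDesc_eq_of_charpoly_eq (cfc_predicate f M) (fun i j hij ↦ ?_) ?_
  · exact hf (eigsDesc_mem_spectrum hM j) (eigsDesc_mem_spectrum hM i) (antitone_eigsDesc M hij)
  · obtain ⟨σ, hσ⟩ := exists_perm_eigsDesc_eq hM
    rw [hM.charpoly_cfc_eq, hσ]
    exact (Equiv.prod_comp σ _).symm

end SortedEigenvalues

section Powers

variable {d : ℕ} {A B : Matrix (Fin d) (Fin d) ℂ}

open scoped MatrixOrder

lemma psdPow_eq_cfc (A : Matrix (Fin d) (Fin d) ℂ) (r : ℝ) :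
    psdPow A r = cfc (fun x : ℝ ↦ x ^ r) A := by
  by_cases hA : A.IsHermitian
  · rw [psdPow, dif_pos hA, hA.cfc_eq]
    rfl
  · rw [psdPow, dif_neg hA]
    exact (cfc_apply_of_not_predicate (p := IsSelfAdjoint) A hA).symm

lemma psdPow_isHermitian (A : Matrix (Fin d) (Fin d) ℂ) (r : ℝ) : (psdPow A r).IsHermitian :=
  psdPow_eq_cfc A r ▸ cfc_predicate _ A

lemma psdPow_posSemidef (hA : A.PosSemidef) (r : ℝ) : (psdPow A r).PosSemidef := by
  rw [psdPow_eq_cfc, ← Matrix.nonneg_iff_posSemidef]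
  exact cfc_nonneg fun x hx ↦ Real.rpow_nonneg (spectrum_nonneg_of_nonneg hA.nonneg hx) r

lemma psdPow_mul_psdPow (hA : A.PosSemidef) {r s : ℝ} (hr : 0 ≤ r) (hs : 0 ≤ s) :
    psdPow A r * psdPow A s = psdPow A (r + s) := by
  simp_rw [psdPow_eq_cfc]
  rw [← cfc_mul _ _ A (finite_real_spectrum.continuousOn _)
    (finite_real_spectrum.continuousOn _)]
  exact cfc_congr fun x hx ↦
    (Real.rpow_add_of_nonneg (spectrum_nonneg_of_nonneg hA.nonneg hx) hr hs).symm

lemma psdPow_half_mul_psdPow_half (hA : A.PosSemidef) {p : ℝ} (hp : 0 ≤ p) :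
    psdPow A (p / 2) * psdPow A (p / 2) = psdPow A p := by
  have hp2 : 0 ≤ p / 2 := by positivity
  rw [psdPow_mul_psdPow hA hp2 hp2, add_halves]

lemma psdPow_le_algebraMap (hA : A.PosSemidef) {p α : ℝ} (hp : 0 ≤ p)
    (hα : ∀ x ∈ spectrum ℝ A, x ≤ α) : psdPow A p ≤ algebraMap ℝ _ (α ^ p) := by
  rw [psdPow_eq_cfc]
  exact cfc_le_algebraMap _ _ A (fun x hx ↦
    Real.rpow_le_rpow (spectrum_nonneg_of_nonneg hA.nonneg hx) (hα x hx) hp)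
    (finite_real_spectrum.continuousOn _) hA.1

lemma algebraMap_le_psdPow (hA : A.IsHermitian) {p α : ℝ} (hp : 0 ≤ p) (hα0 : 0 ≤ α)
    (hα : ∀ x ∈ spectrum ℝ A, α ≤ x) : algebraMap ℝ _ (α ^ p) ≤ psdPow A p := by
  rw [psdPow_eq_cfc]
  exact algebraMap_le_cfc _ _ A (fun x hx ↦ Real.rpow_le_rpow hα0 (hα x hx) hp)
    (finite_real_spectrum.continuousOn _) hA

lemma eigsDesc_psdPow (hA : A.PosSemidef) {r : ℝ} (hr : 0 ≤ r) (i : Fin d) :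
    eigsDesc (psdPow A r) i = eigsDesc A i ^ r := by
  rw [psdPow_eq_cfc, eigsDesc_cfc hA.1 fun x hx y _ hxy ↦
    Real.rpow_le_rpow (spectrum_nonneg_of_nonneg hA.nonneg hx) hxy hr]
  rfl

lemma psdPow_entry_mem_expSums (hA : A.PosSemidef) (i j : Fin d) :
    (fun p ↦ psdPow A p i j) ∈ expSums := by
  simp_rw [psdPow, dif_pos hA.1]
  have hconst (U : Matrix (Fin d) (Fin d) ℂ) (i j : Fin d) : (fun _ : ℝ ↦ U i j) ∈ expSums :=
    expSums.algebraMap_mem (U i j)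
  refine mul_entry_mem (mul_entry_mem (hconst _) fun i j ↦ ?_) (hconst _) i j
  rcases eq_or_ne i j with rfl | hij
  · simpa using rpow_mem_expSums (hA.eigenvalues_nonneg i)
  · simp only [diagonal_apply_ne _ hij]
    exact zero_mem expSums

/-- The matrix `A^{p/2} B^p A^{p/2}`, that is, the power `Z_p ^ p` of `Z_p = Zmat A B p`. -/
noncomputable def sandwichPow (A B : Matrix (Fin d) (Fin d) ℂ) (p : ℝ) :
    Matrix (Fin d) (Fin d) ℂ :=
  psdPow A (p / 2) * psdPow B p * psdPow A (p / 2)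

lemma sandwichPow_posSemidef (A : Matrix (Fin d) (Fin d) ℂ) (hB : B.PosSemidef) (p : ℝ) :
    (sandwichPow A B p).PosSemidef := by
  simpa only [sandwichPow, (psdPow_isHermitian A _).eq] using
    (psdPow_posSemidef hB p).mul_mul_conjTranspose_same (psdPow A (p / 2))

lemma eigsDesc_sandwichPow_nonneg (A : Matrix (Fin d) (Fin d) ℂ) (hB : B.PosSemidef) (p : ℝ)
    (i : Fin d) : 0 ≤ eigsDesc (sandwichPow A B p) i :=
  eigsDesc_nonneg (sandwichPow_posSemidef A hB p) i

lemma eigsDesc_Zmat (A : Matrix (Fin d) (Fin d) ℂ) (hB : B.PosSemidef) {p : ℝ} (hp : 0 ≤ p)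
    (i : Fin d) : eigsDesc (Zmat A B p) i = eigsDesc (sandwichPow A B p) i ^ (1 / p) :=
  eigsDesc_psdPow (sandwichPow_posSemidef A hB p) (one_div_nonneg.2 hp) i

lemma charpoly_sandwichPow (hA : A.PosSemidef) (B : Matrix (Fin d) (Fin d) ℂ) {p : ℝ}
    (hp : 0 ≤ p) : (sandwichPow A B p).charpoly = (psdPow A p * psdPow B p).charpoly := by
  rw [sandwichPow, Matrix.charpoly_mul_comm, ← mul_assoc, psdPow_half_mul_psdPow_half hA hp]

lemma psdPow_half_mul_algebraMap_mul (hA : A.PosSemidef) {p : ℝ} (hp : 0 ≤ p) (c : ℝ) :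
    psdPow A (p / 2) * algebraMap ℝ _ c * psdPow A (p / 2) = c • psdPow A p := by
  rw [← Algebra.commutes, mul_assoc, psdPow_half_mul_psdPow_half hA hp, Algebra.smul_def]

lemma sandwichPow_le_algebraMap (hA : A.PosSemidef) (hB : B.PosSemidef) {p α β : ℝ} (hp : 0 ≤ p)
    (hβ0 : 0 ≤ β) (hα : ∀ x ∈ spectrum ℝ A, x ≤ α) (hβ : ∀ x ∈ spectrum ℝ B, x ≤ β) :
    sandwichPow A B p ≤ algebraMap ℝ _ (β ^ p * α ^ p) :=
  calc sandwichPow A B p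
      ≤ psdPow A (p / 2) * algebraMap ℝ _ (β ^ p) * psdPow A (p / 2) :=
        IsSelfAdjoint.conjugate_le_conjugate (psdPow_le_algebraMap hB hp hβ)
          (psdPow_isHermitian A _)
    _ = β ^ p • psdPow A p := psdPow_half_mul_algebraMap_mul hA hp _
    _ ≤ β ^ p • algebraMap ℝ _ (α ^ p) :=
        smul_le_smul_of_nonneg_left (psdPow_le_algebraMap hA hp hα) (Real.rpow_nonneg hβ0 p)
    _ = algebraMap ℝ _ (β ^ p * α ^ p) := by rw [map_mul, Algebra.smul_def]

lemma algebraMap_le_sandwichPow (hA : A.PosSemidef) (hB : B.IsHermitian) {p α β : ℝ}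
    (hp : 0 ≤ p) (hα0 : 0 ≤ α) (hβ0 : 0 ≤ β) (hα : ∀ x ∈ spectrum ℝ A, α ≤ x)
    (hβ : ∀ x ∈ spectrum ℝ B, β ≤ x) :
    algebraMap ℝ _ (β ^ p * α ^ p) ≤ sandwichPow A B p :=
  calc algebraMap ℝ _ (β ^ p * α ^ p)
      = β ^ p • algebraMap ℝ _ (α ^ p) := by rw [map_mul, Algebra.smul_def]
    _ ≤ β ^ p • psdPow A p :=
        smul_le_smul_of_nonneg_left (algebraMap_le_psdPow hA.1 hp hα0 hα) (Real.rpow_nonneg hβ0 p)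
    _ = psdPow A (p / 2) * algebraMap ℝ _ (β ^ p) * psdPow A (p / 2) :=
        (psdPow_half_mul_algebraMap_mul hA hp _).symm
    _ ≤ sandwichPow A B p :=
        IsSelfAdjoint.conjugate_le_conjugate (algebraMap_le_psdPow hB hp hβ0 hβ)
          (psdPow_isHermitian A _)

lemma eigsDesc_Zmat_le (hA : A.PosSemidef) (hB : B.PosSemidef) {p α β : ℝ} (hp : 0 < p)
    (hα0 : 0 ≤ α) (hβ0 : 0 ≤ β) (hα : ∀ x ∈ spectrum ℝ A, x ≤ α)
    (hβ : ∀ x ∈ spectrum ℝ B, x ≤ β) (i : Fin d) : eigsDesc (Zmat A B p) i ≤ α * β := by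
  have hM : (sandwichPow A B p).IsHermitian := (sandwichPow_posSemidef A hB p).1
  rw [eigsDesc_Zmat A hB hp.le, one_div, Real.rpow_inv_le_iff_of_pos
    (eigsDesc_sandwichPow_nonneg A hB p i) (mul_nonneg hα0 hβ0) hp, mul_comm,
    Real.mul_rpow hβ0 hα0]
  exact (le_algebraMap_iff_spectrum_le hM).1 (sandwichPow_le_algebraMap hA hB hp.le hβ0 hα hβ) _
    (eigsDesc_mem_spectrum hM i)

lemma le_eigsDesc_Zmat (hA : A.PosSemidef) (hB : B.PosSemidef) {p α β : ℝ} (hp : 0 < p)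
    (hα0 : 0 ≤ α) (hβ0 : 0 ≤ β) (hα : ∀ x ∈ spectrum ℝ A, α ≤ x)
    (hβ : ∀ x ∈ spectrum ℝ B, β ≤ x) (i : Fin d) : α * β ≤ eigsDesc (Zmat A B p) i := by
  have hM : (sandwichPow A B p).IsHermitian := (sandwichPow_posSemidef A hB p).1
  rw [eigsDesc_Zmat A hB hp.le, one_div, Real.le_rpow_inv_iff_of_pos (mul_nonneg hα0 hβ0)
    (eigsDesc_sandwichPow_nonneg A hB p i) hp, mul_comm, Real.mul_rpow hβ0 hα0]
  exact (algebraMap_le_iff_le_spectrum hM).1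
    (algebraMap_le_sandwichPow hA hB.1 hp.le hα0 hβ0 hα hβ) _ (eigsDesc_mem_spectrum hM i)

end Powers

section Limits

open Asymptotics

variable {d : ℕ} {A B : Matrix (Fin d) (Fin d) ℂ}

lemma norm_charpoly_coeff_eq_esymm_eigsDesc (hA : A.PosSemidef) {k : ℕ} (hk : k ≤ d) :
    ‖A.charpoly.coeff (d - k)‖ = (univ.val.map (eigsDesc A)).esymm k := by
  simpa only [charpoly_eq_prod_eigsDesc hA.1, Fintype.card_fin] using
    norm_coeff_prod_X_sub_C (eigsDesc_nonneg hA) (hk.trans_eq (Fintype.card_fin d).symm)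

lemma prod_eigsDesc_sandwichPow_isTheta (hA : A.PosSemidef) (hB : B.PosSemidef)
    {s : Finset (Fin d)} (hs : IsLowerSet (s : Set (Fin d))) :
    (fun p ↦ ∏ i ∈ s, eigsDesc (sandwichPow A B p) i) =Θ[atTop]
      fun p ↦ (psdPow A p * psdPow B p).charpoly.coeff (d - #s) := by
  have hm (p : ℝ) := eigsDesc_sandwichPow_nonneg A hB p
  have hcoeff : ∀ᶠ p in atTop, ‖(psdPow A p * psdPow B p).charpoly.coeff (d - #s)‖ =
      (univ.val.map (eigsDesc (sandwichPow A B p))).esymm #s := by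
    filter_upwards [eventually_ge_atTop 0] with p hp
    rw [← charpoly_sandwichPow hA B hp, norm_charpoly_coeff_eq_esymm_eigsDesc
      (sandwichPow_posSemidef A hB p) (card_finset_fin_le s)]
  refine ⟨.of_bound 1 ?_, .of_bound (d.choose #s) ?_⟩ <;>
    filter_upwards [hcoeff] with p hp <;>
    rw [hp, Real.norm_of_nonneg (prod_nonneg fun i _ ↦ hm p i)]
  · simpa only [one_mul] using prod_le_esymm (hm p) s
  · simpa only [Fintype.card_fin] using
      esymm_le_choose_mul_prod (hm p) (antitone_eigsDesc (sandwichPow A B p)) hs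

lemma exists_tendsto_eigsDesc_Zmat (hA : A.PosSemidef) (hB : B.PosSemidef) (i : Fin d) :
    ∃ l : ℝ, Tendsto (fun p : ℝ ↦ eigsDesc (Zmat A B p) i) atTop (𝓝 l) := by
  have hm (p : ℝ) := eigsDesc_sandwichPow_nonneg A hB p
  obtain ⟨x, hx, hΘ⟩ : ∃ x : ℝ, 0 ≤ x ∧
      (fun p ↦ eigsDesc (sandwichPow A B p) i) =Θ[atTop] fun p : ℝ ↦ x ^ p := by
    refine exists_isTheta_rpow_of_prod (.of_forall hm)
      (.of_forall fun p ↦ antitone_eigsDesc _) (fun s hs ↦ ?_) i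
    obtain ⟨x, hx, hΘ⟩ := exists_isTheta_rpow_of_mem_expSums <| charpoly_coeff_mem
      (mul_entry_mem (psdPow_entry_mem_expSums hA) (psdPow_entry_mem_expSums hB)) (d - #s)
    exact ⟨x, hx, (prod_eigsDesc_sandwichPow_isTheta hA hB hs).trans hΘ⟩
  refine ⟨x, (tendsto_norm_rpow_one_div_of_isTheta_rpow hx hΘ).congr' ?_⟩
  filter_upwards [eventually_ge_atTop 0] with p hp
  rw [eigsDesc_Zmat A hB hp, Real.norm_of_nonneg (hm p i)]

end Limits

lemma spectrum_real_unitary_conj_diagonal {n : Type*} [Fintype n] [DecidableEq n]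
    {V : Matrix n n ℂ} (hV : V ∈ Matrix.unitaryGroup n ℂ) (a : n → ℝ) :
    spectrum ℝ (V * Matrix.diagonal (fun i ↦ (a i : ℂ)) * Vᴴ) = Set.range a := by
  ext x
  rw [← spectrum.algebraMap_mem_iff ℂ, ← star_eq_conjTranspose,
    Unitary.spectrum_star_right_conjugate (U := ⟨V, hV⟩), _root_.spectrum_diagonal]
  simp

/-- For every `i`, the `i`-th largest eigenvalue `λ_i(p)` of
`Z_p = (A^{p/2} B^p A^{p/2})^{1/p}` converges as `p → ∞`, and the limits satisfy
`a_1 b_1 ≥ λ_1 ≥ … ≥ λ_d ≥ a_d b_d`. -/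
theorem anti_lie_trotter_eigenvalue_limits_exist
    {d : ℕ} (hd : 0 < d) (A B V W : Matrix (Fin d) (Fin d) ℂ) (a b : Fin d → ℝ)
    (hA : A.PosSemidef) (hB : B.PosSemidef)
    (hV : V ∈ Matrix.unitaryGroup (Fin d) ℂ)
    (hW : W ∈ Matrix.unitaryGroup (Fin d) ℂ)
    (ha : Antitone a) (hb : Antitone b)
    (ha0 : ∀ i, 0 ≤ a i) (hb0 : ∀ i, 0 ≤ b i)
    (hAd : A = V * Matrix.diagonal (fun i => (a i : ℂ)) * Vᴴ)
    (hBd : B = W * Matrix.diagonal (fun i => (b i : ℂ)) * Wᴴ) :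
    ∃ lam : Fin d → ℝ,
      (∀ i, Tendsto (fun p : ℝ => eigsDesc (Zmat A B p) i) atTop (𝓝 (lam i))) ∧
      Antitone lam ∧
      lam ⟨0, hd⟩ ≤ a ⟨0, hd⟩ * b ⟨0, hd⟩ ∧
      a ⟨d - 1, Nat.sub_lt hd one_pos⟩ * b ⟨d - 1, Nat.sub_lt hd one_pos⟩ ≤
        lam ⟨d - 1, Nat.sub_lt hd one_pos⟩ := by
  obtain ⟨hspecA, hspecB⟩ : spectrum ℝ A = Set.range a ∧ spectrum ℝ B = Set.range b :=
    ⟨hAd ▸ spectrum_real_unitary_conj_diagonal hV a, hBd ▸ spectrum_real_unitary_conj_diagonal hW b⟩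
  have hfirst (i : Fin d) : ⟨0, hd⟩ ≤ i := Nat.zero_le i
  have hlast (i : Fin d) : i ≤ ⟨d - 1, Nat.sub_lt hd one_pos⟩ := Nat.le_sub_one_of_lt i.2
  choose lam hlam using exists_tendsto_eigsDesc_Zmat hA hB
  refine ⟨lam, hlam, fun i j hij ↦ ?_, le_of_tendsto (hlam _) ?_, ge_of_tendsto (hlam _) ?_⟩
  · exact le_of_tendsto_of_tendsto' (hlam j) (hlam i) fun p ↦ antitone_eigsDesc _ hij
  · filter_upwards [eventually_gt_atTop 0] with p hp
    refine eigsDesc_Zmat_le hA hB hp (ha0 _) (hb0 _) ?_ ?_ _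
    · simpa only [hspecA, Set.forall_mem_range] using fun i ↦ ha (hfirst i)
    · simpa only [hspecB, Set.forall_mem_range] using fun i ↦ hb (hfirst i)
  · filter_upwards [eventually_gt_atTop 0] with p hp
    refine le_eigsDesc_Zmat hA hB hp (ha0 _) (hb0 _) ?_ ?_ _
    · simpa only [hspecA, Set.forall_mem_range] using fun i ↦ ha (hlast i)
    · simpa only [hspecB, Set.forall_mem_range] using fun i ↦ hb (hlast i)
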